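/- Let Φ(x) be smooth with all relevant Wronskians nonvanishing, Φ^{(j)} = ∂_x^j Φ, and define Φ_{2n} = W_{n+1}[Φ, Φ^{(1)}, …, Φ^{(n)}]/W_n[Φ, Φ^{(1)}, …, Φ^{(n−1)}] and Φ_{2n+1} = W_{n+1}[Φ^{(1)}, …, Φ^{(n+1)}]/W_n[Φ^{(1)}, …, Φ^{(n)}]. Then these Wronskian ratios satisfy the super-Toda relation ∂_x ln Φ_k = Φ_{k+1}/Φ_k + Φ_k/Φ_{k−1} for all k ≥ 1. -/

import Mathlib

/-- Wronskian determinant `W_n[g_1,…,g_n](x) = det(∂_x^{i−1} g_j)`. -/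
noncomputable def wronskian (n : ℕ) (g : Fin n → ℝ → ℝ) (x : ℝ) : ℝ :=
  Matrix.det (Matrix.of fun i j : Fin n => iteratedDeriv (i : ℕ) (g j) x)

/-- `W_n[Φ, Φ^{(1)}, …, Φ^{(n−1)}]`. -/
noncomputable def WA (Φ : ℝ → ℝ) (n : ℕ) (x : ℝ) : ℝ :=
  wronskian n (fun j => iteratedDeriv (j : ℕ) Φ) x

/-- `W_n[Φ^{(1)}, …, Φ^{(n)}]`. -/
noncomputable def WB (Φ : ℝ → ℝ) (n : ℕ) (x : ℝ) : ℝ :=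
  wronskian n (fun j => iteratedDeriv ((j : ℕ) + 1) Φ) x

/-- The Wronskian-ratio chain:
`Φ_{2n} = W_{n+1}[Φ,…,Φ^{(n)}]/W_n[Φ,…,Φ^{(n−1)}]`,
`Φ_{2n+1} = W_{n+1}[Φ^{(1)},…,Φ^{(n+1)}]/W_n[Φ^{(1)},…,Φ^{(n)}]`. -/
noncomputable def PhiDB (Φ : ℝ → ℝ) (k : ℕ) (x : ℝ) : ℝ :=
  if k % 2 = 0 then WA Φ (k / 2 + 1) x / WA Φ (k / 2) x
  else WB Φ (k / 2 + 1) x / WB Φ (k / 2) x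

/-!
Write `τ_{2n} = W_n[Φ, …, Φ^{(n-1)}]` and `τ_{2n+1} = W_n[Φ^{(1)}, …, Φ^{(n)}]`, so that
`Φ_k = τ_{k+2} / τ_k`. The whole chain is the single bilinear identity
`τ_{k+2}' τ_{k+1} - τ_{k+2} τ_{k+1}' = τ_{k+3} τ_k`: divided by `τ_{k+2} τ_{k+1}` it reads
`(ln τ_{k+2})' - (ln τ_{k+1})' = Φ_{k+1} / Φ_k`, and two consecutive instances add up to the
super-Toda relation for `(ln Φ_k)' = (ln τ_{k+2})' - (ln τ_k)'`.

The `τ_k` are Hankel determinants in the derivatives of `Φ`, and differentiating one only moves its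
last row. For odd `k` the bilinear identity is thus Jacobi's identity for the Hankel matrix, with
the last two rows and the two outer columns deleted. For even `k` it is the same instance of
Jacobi's identity for the Hankel matrix bordered by a unit column.
-/

section Determinants

open Matrix

variable {R ι : Type*} [CommRing R] [Fintype ι] [DecidableEq ι]

theorem det_smul_eq_sum_det_updateRow_smul (M : Matrix ι ι R) (u : ι → R) :
    M.det • u = ∑ k, (M.updateRow k u).det • M k := by
  rw [← det_transpose, ← mulVec_cramer, mulVec_eq_sum]
  simp only [cramer_transpose_apply, op_smul_eq_smul, transpose_transpose]

/-- The three-term Plücker relation. -/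
theorem det_mul_det_updateRow_updateRow (M : Matrix ι ι R) {p q : ι} (hpq : p ≠ q) (u v : ι → R) :
    M.det * ((M.updateRow p u).updateRow q v).det =
      (M.updateRow p u).det * (M.updateRow q v).det -
        (M.updateRow p v).det * (M.updateRow q u).det := by
  have hp : ((M.updateRow q v).updateRow p (M p)).det = (M.updateRow q v).det := by
    rw [updateRow_comm _ hpq.symm, updateRow_eq_self]
  have hq : ((M.updateRow q v).updateRow p (M q)).det = -(M.updateRow p v).det := by
    have hswap : ((M.updateRow q v).updateRow p (M q)).submatrix (Equiv.swap p q) id =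
        M.updateRow p v := by
      ext i j
      rcases eq_or_ne i p with rfl | hip
      · simp [hpq.symm]
      rcases eq_or_ne i q with rfl | hiq
      · simp [hip]
      · simp [Equiv.swap_apply_of_ne_of_ne hip hiq, hip, hiq]
    rw [← hswap, det_permute, Equiv.Perm.sign_swap hpq]
    simp
  have hother (k : ι) (hk : k ≠ p ∧ k ≠ q) : ((M.updateRow q v).updateRow p (M k)).det = 0 :=
    det_zero_of_row_eq hk.1 (by rw [updateRow_ne hk.1, updateRow_ne hk.2, updateRow_self])
  calc M.det * ((M.updateRow p u).updateRow q v).det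
      = cramer (M.updateRow q v)ᵀ (M.det • u) p := by
        rw [updateRow_comm _ hpq, map_smul, Pi.smul_apply, cramer_transpose_apply, smul_eq_mul]
    _ = ∑ k, (M.updateRow k u).det * ((M.updateRow q v).updateRow p (M k)).det := by
        simp_rw [← cramer_transpose_apply (M.updateRow q v)]
        rw [det_smul_eq_sum_det_updateRow_smul, map_sum, Finset.sum_apply]
        simp only [map_smul, Pi.smul_apply, smul_eq_mul]
    _ = _ := by
        rw [Fintype.sum_eq_add p q hpq fun k hk => by rw [hother k hk, mul_zero], hp, hq]
        ring

theorem det_updateRow_single {n : ℕ} (M : Matrix (Fin (n + 1)) (Fin (n + 1)) R)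
    (i j : Fin (n + 1)) :
    (M.updateRow i (Pi.single j 1)).det =
      (-1) ^ (i + j : ℕ) * (M.submatrix i.succAbove j.succAbove).det := by
  rw [← adjugate_apply, adjugate_fin_succ_eq_det_submatrix]

/-- Jacobi's identity for the last two rows and the two outer columns. -/
theorem det_mul_det_submatrix_eq_sub {n : ℕ} (M : Matrix (Fin (n + 2)) (Fin (n + 2)) R) :
    M.det * (M.submatrix (Fin.castSucc ∘ Fin.castSucc) (Fin.castSucc ∘ Fin.succ)).det =
      (M.submatrix (Fin.last n).castSucc.succAbove Fin.succ).det *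
          (M.submatrix Fin.castSucc Fin.castSucc).det -
        (M.submatrix Fin.castSucc Fin.succ).det *
          (M.submatrix (Fin.last n).castSucc.succAbove Fin.castSucc).det := by
  have hrows : (Fin.last n).castSucc ≠ Fin.last (n + 1) := (Fin.castSucc_lt_last _).ne
  have hinner : ((M.updateRow (Fin.last n).castSucc (Pi.single 0 1)).submatrix Fin.castSucc
      Fin.castSucc) = (M.submatrix Fin.castSucc Fin.castSucc).updateRow (Fin.last n)
        (Pi.single 0 1) := by
    ext i j
    rcases eq_or_ne i (Fin.last n) with rfl | hi
    · simp [Pi.single_apply]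
    · simp [hi]
  have plucker := det_mul_det_updateRow_updateRow M hrows (Pi.single 0 1)
    (Pi.single (Fin.last (n + 1)) 1)
  simp only [det_updateRow_single, Fin.succAbove_last, hinner, submatrix_submatrix,
    Fin.succAbove_zero, Fin.val_castSucc, Fin.val_last, Fin.val_zero, add_zero,
    Even.neg_one_pow ⟨n + 1, rfl⟩, Odd.neg_one_pow (odd_add_self_one' (a := n))] at plucker
  refine (isUnit_neg_one.pow n).mul_left_cancel ?_
  linear_combination plucker

theorem det_eq_det_submatrix_succ {n : ℕ} (M : Matrix (Fin (n + 1)) (Fin (n + 1)) R)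
    (h0 : M 0 0 = 1) (hsucc : ∀ i : Fin n, M i.succ 0 = 0) :
    M.det = (M.submatrix Fin.succ Fin.succ).det := by
  simp [det_succ_column_zero, Fin.sum_univ_succ, h0, hsucc]

end Determinants

section HankelDeterminants

open Matrix

variable {R : Type*} [CommRing R]

/-- The Hankel determinant `det (a_{i+j})` of size `n`. The Wronskians of the chain are of this
form, with `a_k` a derivative of `Φ`. -/
def hankelDet (a : ℕ → R) (n : ℕ) : R :=
  (of fun i j : Fin n => a (i + j)).det

/-- The formal derivative of `hankelDet a n` under the rule `a_k' = a_{k+1}`, expanded along rows by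
the Leibniz rule. -/
def hankelDeriv (a : ℕ → R) (n : ℕ) : R :=
  ∑ i : Fin n, ((of fun i j : Fin n => a (i + j)).updateRow i fun j => a (i + j + 1)).det

theorem hankelDeriv_zero (a : ℕ → R) : hankelDeriv a 0 = 0 := by
  simp [hankelDeriv]

/-- All terms but the last have two equal rows. -/
theorem hankelDeriv_succ (a : ℕ → R) (n : ℕ) :
    hankelDeriv a (n + 1) =
      (of fun i j : Fin (n + 1) => a ((Fin.last n).castSucc.succAbove i + j)).det := by
  rw [hankelDeriv, Finset.sum_eq_single (Fin.last n)]
  · congr 1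
    ext i j
    refine Fin.lastCases ?_ (fun i => ?_) i
    · simp [add_right_comm]
    · simp
  · intro i _ hi
    obtain ⟨i, rfl⟩ := Fin.exists_castSucc_eq.2 hi
    have hne : i.castSucc ≠ i.succ := Fin.castSucc_lt_succ.ne
    refine det_zero_of_row_eq hne (funext fun j => ?_)
    rw [updateRow_self, updateRow_ne hne.symm]
    simp [add_right_comm]
  · simp

theorem hankelDeriv_shift_mul_sub (a : ℕ → R) (n : ℕ) :
    hankelDeriv (fun k => a (k + 1)) (n + 1) * hankelDet a (n + 1) -
        hankelDet (fun k => a (k + 1)) (n + 1) * hankelDeriv a (n + 1) =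
      hankelDet a (n + 2) * hankelDet (fun k => a (k + 1)) n := by
  have jacobi := det_mul_det_submatrix_eq_sub (of fun i j : Fin (n + 2) => a (i + j))
  simp only [hankelDeriv_succ, hankelDet]
  exact jacobi.symm

theorem hankelDeriv_mul_sub_shift (a : ℕ → R) (n : ℕ) :
    hankelDeriv a (n + 1) * hankelDet (fun k => a (k + 1)) n -
        hankelDet a (n + 1) * hankelDeriv (fun k => a (k + 1)) n =
      hankelDet (fun k => a (k + 1)) (n + 1) * hankelDet a n := by
  let K : Matrix (Fin (n + 2)) (Fin (n + 2)) R :=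
    of fun i => Fin.cons (if i = 0 then 1 else 0) fun j => a (i + j)
  have hK : K.det = hankelDet (fun k => a (k + 1)) (n + 1) := by
    rw [det_eq_det_submatrix_succ K (by simp [K]) (by simp [K])]
    congr 1
    ext i j
    simp [K, add_right_comm]
  have hcorner : (K.submatrix Fin.castSucc Fin.castSucc).det =
      hankelDet (fun k => a (k + 1)) n := by
    rw [det_eq_det_submatrix_succ _ (by simp [K]) (by simp [K])]
    congr 1
    ext i j
    simp [K, add_right_comm]
  have hskip : (K.submatrix (Fin.last n).castSucc.succAbove Fin.castSucc).det =
      hankelDeriv (fun k => a (k + 1)) n := by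
    cases n with
    | zero => simp [K, hankelDeriv_zero]
    | succ n =>
      have hsucc (i : Fin (n + 1)) : (Fin.last (n + 1)).castSucc.succAbove i.succ =
          ((Fin.last n).castSucc.succAbove i).succ :=
        Fin.succ_succAbove_succ (Fin.last n).castSucc i
      rw [det_eq_det_submatrix_succ _ (by simp [K]) (by simp [K, hsucc]), hankelDeriv_succ]
      congr 1
      ext i j
      simp [K, hsucc, add_right_comm]
  have jacobi := det_mul_det_submatrix_eq_sub K
  rw [hK, hcorner, hskip] at jacobi
  rw [hankelDeriv_succ a]
  exact jacobi.symm

end HankelDeterminants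

section Derivatives

variable {𝕜 : Type*} [NontriviallyNormedField 𝕜]

theorem hasDerivAt_det {ι : Type*} [Fintype ι] [DecidableEq ι] {M : 𝕜 → Matrix ι ι 𝕜}
    {M' : Matrix ι ι 𝕜} {x : 𝕜} (hM : ∀ i j, HasDerivAt (fun y => M y i j) (M' i j) x) :
    HasDerivAt (fun y => (M y).det) (∑ i, ((M x).updateRow i (M' i)).det) x := by
  have hprod (σ : Equiv.Perm ι) : HasDerivAt (fun y => ∏ i, M y i (σ i))
      (∑ i, ∏ j, (M x).updateRow i (M' i) j (σ j)) x := by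
    refine (HasDerivAt.fun_finsetProd (u := Finset.univ) fun i _ => hM i (σ i)).congr_deriv ?_
    refine Finset.sum_congr rfl fun i hi => ?_
    rw [← Finset.prod_erase_mul _ _ hi, Matrix.updateRow_self, smul_eq_mul]
    congr 1
    refine Finset.prod_congr rfl fun j hj => ?_
    rw [Matrix.updateRow_ne (Finset.ne_of_mem_erase hj)]
  have hdet (N : Matrix ι ι 𝕜) : N.det = ∑ σ : Equiv.Perm ι, (σ.sign : 𝕜) * ∏ i, N i (σ i) := by
    rw [← Matrix.det_transpose, Matrix.det_apply']
    rfl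
  simp only [hdet]
  rw [Finset.sum_comm]
  simp only [← Finset.mul_sum]
  exact HasDerivAt.fun_sum fun σ _ => (hprod σ).const_mul _

theorem hasDerivAt_hankelDet {a : ℕ → 𝕜 → 𝕜} {x : 𝕜} {n : ℕ}
    (ha : ∀ k, k + 1 < 2 * n → HasDerivAt (a k) (a (k + 1) x) x) :
    HasDerivAt (fun y => hankelDet (fun k => a k y) n) (hankelDeriv (fun k => a k x) n) x :=
  hasDerivAt_det fun i j => ha (i + j) (by omega)

theorem iteratedDeriv_iteratedDeriv_eq_add {F : Type*} [NormedAddCommGroup F] [NormedSpace 𝕜 F]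
    (f : 𝕜 → F) (i j : ℕ) : iteratedDeriv i (iteratedDeriv j f) = iteratedDeriv (i + j) f := by
  simp only [iteratedDeriv_eq_iterate, Function.iterate_add_apply]

theorem hasDerivAt_iteratedDeriv {F : Type*} [NormedAddCommGroup F] [NormedSpace 𝕜 F]
    {f : 𝕜 → F} {x : 𝕜} {m k : ℕ} (hf : ContDiffAt 𝕜 m f x) (hk : k < m) :
    HasDerivAt (iteratedDeriv k f) (iteratedDeriv (k + 1) f x) x := by
  have hdiff : DifferentiableWithinAt 𝕜 (iteratedDerivWithin k f Set.univ) Set.univ x :=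
    (hf.contDiffWithinAt (s := Set.univ)).differentiableWithinAt_iteratedDerivWithin
      (by exact_mod_cast hk)
      (by simpa only [Set.insert_eq_of_mem, Set.mem_univ] using uniqueDiffOn_univ)
  rw [iteratedDerivWithin_univ, differentiableWithinAt_univ] at hdiff
  rw [iteratedDeriv_succ]
  exact hdiff.hasDerivAt

end Derivatives

section Chain

variable {Φ : ℝ → ℝ} {x : ℝ} {k m n : ℕ}

theorem WA_eq_hankelDet (Φ : ℝ → ℝ) (n : ℕ) :
    WA Φ n = fun x => hankelDet (fun k => iteratedDeriv k Φ x) n := by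
  funext x
  simp only [WA, wronskian, hankelDet, iteratedDeriv_iteratedDeriv_eq_add]

theorem WB_eq_hankelDet (Φ : ℝ → ℝ) (n : ℕ) :
    WB Φ n = fun x => hankelDet (fun k => iteratedDeriv (k + 1) Φ x) n := by
  funext x
  simp only [WB, wronskian, hankelDet, iteratedDeriv_iteratedDeriv_eq_add, add_assoc]

theorem hasDerivAt_WA (hΦ : ContDiffAt ℝ m Φ x) (hn : 2 * n ≤ m + 1) :
    HasDerivAt (WA Φ n) (hankelDeriv (fun k => iteratedDeriv k Φ x) n) x := by
  rw [WA_eq_hankelDet]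
  exact hasDerivAt_hankelDet fun k hk => hasDerivAt_iteratedDeriv hΦ (by omega)

theorem hasDerivAt_WB (hΦ : ContDiffAt ℝ m Φ x) (hn : 2 * n ≤ m) :
    HasDerivAt (WB Φ n) (hankelDeriv (fun k => iteratedDeriv (k + 1) Φ x) n) x := by
  rw [WB_eq_hankelDet]
  exact hasDerivAt_hankelDet fun k hk => hasDerivAt_iteratedDeriv hΦ (by omega)

/-- The tau functions of the chain, `τ_{2n} = W_n[Φ, …, Φ^{(n-1)}]` and
`τ_{2n+1} = W_n[Φ^{(1)}, …, Φ^{(n)}]`, interleaved so that `Φ_k = τ_{k+2} / τ_k`. -/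
noncomputable def chainTau (Φ : ℝ → ℝ) (k : ℕ) (x : ℝ) : ℝ :=
  if k % 2 = 0 then WA Φ (k / 2) x else WB Φ (k / 2) x

theorem chainTau_two_mul (Φ : ℝ → ℝ) (n : ℕ) : chainTau Φ (2 * n) = WA Φ n := by
  funext x
  simp [chainTau]

theorem chainTau_two_mul_add_one (Φ : ℝ → ℝ) (n : ℕ) : chainTau Φ (2 * n + 1) = WB Φ n := by
  funext x
  simp [chainTau, Nat.add_mod, show (2 * n + 1) / 2 = n by omega]

theorem chainTau_ne_zero (hA : ∀ n, WA Φ n x ≠ 0) (hB : ∀ n, WB Φ n x ≠ 0) (k : ℕ) :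
    chainTau Φ k x ≠ 0 := by
  unfold chainTau
  split_ifs
  exacts [hA _, hB _]

theorem PhiDB_eq_chainTau_div (Φ : ℝ → ℝ) (k : ℕ) :
    PhiDB Φ k = fun x => chainTau Φ (k + 2) x / chainTau Φ k x := by
  funext x
  simp only [PhiDB, chainTau, Nat.add_mod_right, Nat.add_div_right, Nat.zero_lt_two]
  split_ifs <;> rfl

theorem differentiableAt_chainTau (hΦ : ContDiffAt ℝ k Φ x) :
    DifferentiableAt ℝ (chainTau Φ (k + 1)) x := by
  rcases Nat.even_or_odd' k with ⟨n, rfl | rfl⟩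
  · rw [chainTau_two_mul_add_one]
    exact (hasDerivAt_WB hΦ le_rfl).differentiableAt
  · rw [show 2 * n + 1 + 1 = 2 * (n + 1) by ring, chainTau_two_mul]
    exact (hasDerivAt_WA hΦ le_rfl).differentiableAt

theorem deriv_chainTau_mul_sub (hΦ : ContDiffAt ℝ (k + 1 : ℕ) Φ x) :
    deriv (chainTau Φ (k + 2)) x * chainTau Φ (k + 1) x -
        chainTau Φ (k + 2) x * deriv (chainTau Φ (k + 1)) x =
      chainTau Φ (k + 3) x * chainTau Φ k x := by
  rcases Nat.even_or_odd' k with ⟨n, rfl | rfl⟩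
  · rw [show 2 * n + 2 = 2 * (n + 1) by ring, show 2 * n + 3 = 2 * (n + 1) + 1 by ring]
    simp only [chainTau_two_mul, chainTau_two_mul_add_one]
    rw [(hasDerivAt_WA hΦ (by omega)).deriv, (hasDerivAt_WB hΦ (by omega)).deriv]
    simp only [WA_eq_hankelDet, WB_eq_hankelDet]
    exact hankelDeriv_mul_sub_shift (fun k => iteratedDeriv k Φ x) n
  · rw [show 2 * n + 1 + 2 = 2 * (n + 1) + 1 by ring, show 2 * n + 1 + 1 = 2 * (n + 1) by ring,
      show 2 * n + 1 + 3 = 2 * (n + 2) by ring]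
    simp only [chainTau_two_mul, chainTau_two_mul_add_one]
    rw [(hasDerivAt_WA hΦ (by omega)).deriv, (hasDerivAt_WB hΦ (by omega)).deriv]
    simp only [WA_eq_hankelDet, WB_eq_hankelDet]
    exact hankelDeriv_shift_mul_sub (fun k => iteratedDeriv k Φ x) n

theorem logDeriv_chainTau_sub (hΦ : ContDiffAt ℝ (k + 1 : ℕ) Φ x)
    (h₁ : chainTau Φ (k + 1) x ≠ 0) (h₂ : chainTau Φ (k + 2) x ≠ 0) :
    logDeriv (chainTau Φ (k + 2)) x - logDeriv (chainTau Φ (k + 1)) x =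
      PhiDB Φ (k + 1) x / PhiDB Φ k x := by
  simp only [PhiDB_eq_chainTau_div, logDeriv_apply]
  rw [div_sub_div _ _ h₂ h₁, deriv_chainTau_mul_sub hΦ, div_div_div_eq, add_assoc]
  ring

theorem stmt_9_general (hΦ : ContDiffAt ℝ (k + 2 : ℕ) Φ x)
    (hτ : ∀ j ∈ Set.Icc k (k + 3), chainTau Φ j x ≠ 0) :
    deriv (PhiDB Φ (k + 1)) x / PhiDB Φ (k + 1) x =
      PhiDB Φ (k + 2) x / PhiDB Φ (k + 1) x + PhiDB Φ (k + 1) x / PhiDB Φ k x := by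
  have hτ₁ : chainTau Φ (k + 1) x ≠ 0 := hτ _ ⟨by omega, by omega⟩
  have hτ₂ : chainTau Φ (k + 2) x ≠ 0 := hτ _ ⟨by omega, by omega⟩
  have hτ₃ : chainTau Φ (k + 3) x ≠ 0 := hτ _ ⟨by omega, by omega⟩
  have hΦ' (j : ℕ) (hj : j ≤ k + 2) : ContDiffAt ℝ j Φ x := hΦ.of_le (by exact_mod_cast hj)
  calc logDeriv (PhiDB Φ (k + 1)) x
      = logDeriv (chainTau Φ (k + 3)) x - logDeriv (chainTau Φ (k + 1)) x := by
        rw [PhiDB_eq_chainTau_div]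
        exact logDeriv_div x hτ₃ hτ₁ (differentiableAt_chainTau hΦ)
          (differentiableAt_chainTau (hΦ' k (by omega)))
    _ = (logDeriv (chainTau Φ (k + 3)) x - logDeriv (chainTau Φ (k + 2)) x) +
          (logDeriv (chainTau Φ (k + 2)) x - logDeriv (chainTau Φ (k + 1)) x) := by ring
    _ = _ := by
        rw [logDeriv_chainTau_sub hΦ hτ₂ hτ₃, logDeriv_chainTau_sub (hΦ' _ (by omega)) hτ₁ hτ₂]

end Chain

/- The Wronskian ratios satisfy the super-Toda relation
`∂_x ln Φ_k = Φ_{k+1}/Φ_k + Φ_k/Φ_{k−1}` for all `k ≥ 1`. -/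
theorem stmt_9 (Φ : ℝ → ℝ) (hΦ : ContDiff ℝ (⊤ : ℕ∞) Φ)
    (hA : ∀ n x, WA Φ n x ≠ 0) (hB : ∀ n x, WB Φ n x ≠ 0) :
    ∀ k, 1 ≤ k → ∀ x,
      deriv (PhiDB Φ k) x / PhiDB Φ k x
        = PhiDB Φ (k+1) x / PhiDB Φ k x + PhiDB Φ k x / PhiDB Φ (k-1) x := by
  rintro (_ | k) hk x
  · omega
  exact stmt_9_general (contDiff_infty.1 hΦ (k + 2)).contDiffAt
    fun j _ => chainTau_ne_zero (hA · x) (hB · x) j
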